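/- Let A, B, Y be Polish metric spaces. The disintegration map disint_A : 𝒫_p(A × B × Y) → 𝒫_p(A × 𝒫_p(B × Y)), restricted to FP(A × B, Y), maps FP(A × B, Y) onto FP(A, FP(B, Y)). In particular: (i) if μ ∈ 𝒫_p(A × B × Y) is concentrated on the graph of a Borel function g : A × B → Y, then for the regular conditional law a ↦ μ_a of the (B,Y)-coordinates given the A-coordinate, μ_a is concentrated on the graph of b ↦ g(a,b) for μ-a.e. a (so disint_A(μ) ∈ FP(A, FP(B,Y))); and (ii) every α ∈ FP(A, FP(B, Y)) equals disint_A(ν) for some ν ∈ FP(A × B, Y). -/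

import Mathlib

open MeasureTheory ProbabilityTheory ENNReal Filter Topology

noncomputable section

namespace AWPaper

/-! ### Generic constructions -/

variable {α β : Type*}

/-- The set of couplings of two measures. -/
def Cpl [MeasurableSpace α] [MeasurableSpace β] (μ : Measure α) (ν : Measure β) :
    Set (Measure (α × β)) :=
  {π | π.map Prod.fst = μ ∧ π.map Prod.snd = ν}

/-- The `p`-Wasserstein distance (with values in `ℝ≥0∞`) associated to an
`ℝ≥0∞`-valued distance function `d`. -/
def Wp [MeasurableSpace α] (p : ℝ) (d : α → α → ℝ≥0∞) (μ ν : Measure α) : ℝ≥0∞ :=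
  ⨅ π ∈ Cpl μ ν, (∫⁻ z, d z.1 z.2 ^ p ∂π) ^ (1 / p)

/-- The topology generated by the open balls of an `ℝ≥0∞`-valued distance
function.  For a genuine metric this is the metric topology. -/
def ballTop (d : α → α → ℝ≥0∞) : TopologicalSpace α :=
  TopologicalSpace.generateFrom {s | ∃ x ε, 0 < ε ∧ s = {y | d x y < ε}}

/-- The product distance of two `ℝ≥0∞`-valued distances, `ℓ^p`-style. -/
def prodDist (p : ℝ) (d₁ : α → α → ℝ≥0∞) (d₂ : β → β → ℝ≥0∞) :
    α × β → α × β → ℝ≥0∞ :=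
  fun u v => (d₁ u.1 v.1 ^ p + d₂ u.2 v.2 ^ p) ^ (1 / p)

/-- Membership in the `p`-Wasserstein space: a probability measure with finite
`p`-th moment (w.r.t. the distance function `d`). -/
def MemPp [MeasurableSpace α] (p : ℝ) (d : α → α → ℝ≥0∞) (μ : Measure α) : Prop :=
  IsProbabilityMeasure μ ∧ ∃ x₀, ∫⁻ x, d x₀ x ^ p ∂μ ≠ ∞

/-- The weak topology on measures induced by integration of bounded continuous
functions, for a given topology `τ` on the base space. -/
def weakTop [MeasurableSpace α] (τ : TopologicalSpace α) : TopologicalSpace (Measure α) :=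
  TopologicalSpace.induced
    (fun μ => fun f : @BoundedContinuousFunction α ℝ τ _ => ∫ x, f x ∂μ)
    Pi.topologicalSpace

/-- The product topology built from two explicitly given topologies. -/
def prodTop (τ₁ : TopologicalSpace α) (τ₂ : TopologicalSpace β) : TopologicalSpace (α × β) :=
  TopologicalSpace.induced Prod.fst τ₁ ⊓ TopologicalSpace.induced Prod.snd τ₂

/-- An everywhere-defined version of the disintegration kernel: it agrees with
`Measure.condKernel` on finite measures. -/
def condK [MeasurableSpace α] [MeasurableSpace β] [StandardBorelSpace β] [Nonempty β]
    (ρ : Measure (α × β)) : Kernel α β :=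
  letI := Classical.dec (IsFiniteMeasure ρ)
  if h : IsFiniteMeasure ρ then @Measure.condKernel α β _ _ _ _ ρ h else 0

/-- The disintegration map `𝒫(A × B) → 𝒫(A × 𝒫(B))`. -/
def disint [MeasurableSpace α] [MeasurableSpace β] [StandardBorelSpace β] [Nonempty β]
    (μ : Measure (α × β)) : Measure (α × Measure β) :=
  μ.map (fun z => (z.1, condK μ z.1))

/-- The intensity ("und") map `𝒫(A × 𝒫(B)) → 𝒫(A × B)`. -/
def und [MeasurableSpace α] [MeasurableSpace β] (μ : Measure (α × Measure β)) :
    Measure (α × β) :=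
  μ.bind (fun z => (Measure.dirac z.1).prod z.2)

/-! ### Path spaces -/

variable {X : Type*} [MeasurableSpace X]

/-- The path-space distance `ρ̄((x_t),(y_t)) = (∑ ρ(x_t,y_t)^p)^{1/p}`. -/
def pathDist (p : ℝ) (d : X → X → ℝ≥0∞) {N : ℕ} :
    (Fin N → X) → (Fin N → X) → ℝ≥0∞ :=
  fun x y => (∑ t, d (x t) (y t) ^ p) ^ (1 / p)

/-- The first `t` coordinates of a path. -/
def restr {N : ℕ} (t : ℕ) (h : t ≤ N) (x : Fin N → X) : Fin t → X :=
  fun s => x (Fin.castLE h s)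

/-- The last `N - t` coordinates of a path. -/
def tailr {N : ℕ} (t : ℕ) (h : t ≤ N) (x : Fin N → X) : Fin (N - t) → X :=
  fun s => x ⟨t + s.1, by have := s.2; omega⟩

/-- A coupling `π` of two path measures is causal: for every `t` and Borel
`A ⊆ 𝒳^t`, `π((Y_1,…,Y_t) ∈ A | X) = π((Y_1,…,Y_t) ∈ A | X_1,…,X_t)` a.s. -/
def Causal {N : ℕ} (π : Measure ((Fin N → X) × (Fin N → X))) : Prop :=
  ∀ (t : ℕ) (h : t ≤ N) (A : Set (Fin t → X)), MeasurableSet A →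
    (π[fun z => A.indicator (fun _ => (1 : ℝ)) (restr t h z.2) |
        MeasurableSpace.comap Prod.fst inferInstance])
      =ᵐ[π]
    (π[fun z => A.indicator (fun _ => (1 : ℝ)) (restr t h z.2) |
        MeasurableSpace.comap (fun z => restr t h z.1) inferInstance])

/-- Bicausal couplings. -/
def Bicausal {N : ℕ} (π : Measure ((Fin N → X) × (Fin N → X))) : Prop :=
  Causal π ∧ Causal (π.map Prod.swap)

/-- The causal Wasserstein "distance" `CW_p`. -/
def CW (p : ℝ) (d : X → X → ℝ≥0∞) {N : ℕ} (μ ν : Measure (Fin N → X)) : ℝ≥0∞ :=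
  ⨅ π ∈ {π ∈ Cpl μ ν | Causal π}, (∫⁻ z, pathDist p d z.1 z.2 ^ p ∂π) ^ (1 / p)

/-- The symmetrized causal Wasserstein distance `SCW_p`. -/
def SCW (p : ℝ) (d : X → X → ℝ≥0∞) {N : ℕ} (μ ν : Measure (Fin N → X)) : ℝ≥0∞ :=
  max (CW p d μ ν) (CW p d ν μ)

/-- The adapted (nested, bicausal) Wasserstein distance `AW_p`. -/
def AW (p : ℝ) (d : X → X → ℝ≥0∞) {N : ℕ} (μ ν : Measure (Fin N → X)) : ℝ≥0∞ :=
  ⨅ π ∈ {π ∈ Cpl μ ν | Bicausal π}, (∫⁻ z, pathDist p d z.1 z.2 ^ p ∂π) ^ (1 / p)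

/-! ### Nested spaces (Pflug's nested distributions / Vershik's iterated spaces) -/

/-- A measurable space together with an `ℝ≥0∞`-valued distance. -/
structure QMS : Type 1 where
  carrier : Type
  inst : MeasurableSpace carrier
  dist : carrier → carrier → ℝ≥0∞

/-- The nested sequence of spaces: `nest X _ d p 0 = 𝒳` (this is `𝒳_N`), and
`nest X _ d p (k+1) = 𝒳 × 𝒫(nest X _ d p k)` with the nested distance
`D = (ρ^p + 𝒲_p^p)^{1/p}`.  Thus `𝒳_1` (for `N = k+1` time points) is
`nest X _ d p k`. -/
def nest (X : Type) (mX : MeasurableSpace X) (d : X → X → ℝ≥0∞) (p : ℝ) : ℕ → QMS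
  | 0 => ⟨X, mX, d⟩
  | (k + 1) =>
    let Q := nest X mX d p k
    ⟨X × @Measure Q.carrier Q.inst,
      @Prod.instMeasurableSpace _ _ mX (@Measure.instMeasurableSpace _ Q.inst),
      fun a b => (d a.1 b.1 ^ p + (@Wp _ Q.inst p Q.dist a.2 b.2) ^ p) ^ (1 / p)⟩

section NMapSec

variable (Y : Type) [mY : MeasurableSpace Y] [TopologicalSpace Y] [PolishSpace Y]
  [BorelSpace Y] [Nonempty Y]

/-- The map `𝒩` sending the law of a process with `k+1` time steps to the
corresponding nested distribution, via iterated regular conditional laws. -/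
def NMap (d : Y → Y → ℝ≥0∞) (p : ℝ) :
    ∀ k : ℕ, Measure (Fin (k + 1) → Y) →
      @Measure (nest Y mY d p k).carrier (nest Y mY d p k).inst
  | 0, μ =>
    letI : MeasurableSpace (nest Y mY d p 0).carrier := (nest Y mY d p 0).inst
    μ.map (fun x => x 0)
  | (k + 1), μ =>
    letI : MeasurableSpace (nest Y mY d p k).carrier := (nest Y mY d p k).inst
    letI : MeasurableSpace (nest Y mY d p (k + 1)).carrier := (nest Y mY d p (k + 1)).inst
    (μ.map (fun x => x 0)).map
      (fun x₀ => (x₀, NMap d p k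
        ((condK (μ.map (fun x => (x 0, fun s : Fin (k + 1) => x s.succ)))) x₀)))

end NMapSec

section PathStructures

variable {Y : Type*} [mY : MeasurableSpace Y]

/-- A process `L` is adapted: `L t` depends only on the first `t+1` coordinates. -/
def AdaptedProc {N : ℕ} (L : Fin N → (Fin N → Y) → ℝ) : Prop :=
  ∀ (t : Fin N) (x y : Fin N → Y), (∀ s : Fin N, s ≤ t → x s = y s) → L t x = L t y

/-- `τ` is a stopping time of the canonical filtration on the path space. -/
def IsStopTime {N : ℕ} (τ : (Fin N → Y) → Fin N) : Prop :=
  ∀ t : Fin N,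
    MeasurableSet[MeasurableSpace.comap (restr (X := Y) (t.1 + 1) t.2) inferInstance]
      {x | τ x = t}

/-- The optimal stopping value `v^L(μ)`. -/
def stopVal {N : ℕ} (L : Fin N → (Fin N → Y) → ℝ) (μ : Measure (Fin N → Y)) : ℝ :=
  ⨅ τ : {τ : (Fin N → Y) → Fin N // IsStopTime τ}, ∫ x, L (τ.1 x) x ∂μ

variable [TopologicalSpace Y]

/-- `AC(X̄)`: adapted processes which are continuous and bounded. -/
def ACbdd {N : ℕ} (L : Fin N → (Fin N → Y) → ℝ) : Prop :=
  (∀ t, Continuous (L t)) ∧ AdaptedProc L ∧ ∃ C : ℝ, ∀ t x, |L t x| ≤ C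

/-- `AC_p(X̄)`: adapted continuous processes of growth of order `p`. -/
def ACp (p : ℝ) (d : Y → Y → ℝ≥0∞) {N : ℕ} (L : Fin N → (Fin N → Y) → ℝ) : Prop :=
  (∀ t, Continuous (L t)) ∧ AdaptedProc L ∧
    ∃ (C : ℝ) (x₀ : Fin N → Y), ∀ t x, |L t x| ≤ C * (1 + ((pathDist p d x₀ x) ^ p).toReal)

/-- The optimal stopping topology (weak version, bounded continuous rewards). -/
def stopTopW (N : ℕ) : TopologicalSpace (Measure (Fin N → Y)) :=
  ⨅ L : {L : Fin N → (Fin N → Y) → ℝ // ACbdd L},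
    TopologicalSpace.induced (stopVal L.1) inferInstance

/-- The `𝒲_p`-optimal stopping topology. -/
def stopTopWp (p : ℝ) (d : Y → Y → ℝ≥0∞) (N : ℕ) :
    TopologicalSpace (Measure (Fin N → Y)) :=
  ⨅ L : {L : Fin N → (Fin N → Y) → ℝ // ACp p d L},
    TopologicalSpace.induced (stopVal L.1) inferInstance

variable [PolishSpace Y] [BorelSpace Y] [Nonempty Y]

/-- Hellwig's map `I_t`, sending `μ` to the joint law of the first `t`
coordinates together with the conditional law of the remaining coordinates. -/
def infoMap (N t : ℕ) (h : t ≤ N) (μ : Measure (Fin N → Y)) :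
    Measure ((Fin t → Y) × Measure (Fin (N - t) → Y)) :=
  μ.map (fun x => (restr t h x,
    condK (μ.map (fun y => (restr t h y, tailr t h y))) (restr t h x)))

/-- Hellwig's information topology (weak version). -/
def infoTopW (N : ℕ) : TopologicalSpace (Measure (Fin N → Y)) :=
  ⨅ (t : ℕ) (_ : 1 ≤ t) (h : t ≤ N - 1),
    TopologicalSpace.induced (infoMap N t (le_trans h (Nat.sub_le N 1)))
      (weakTop (prodTop Pi.topologicalSpace (weakTop Pi.topologicalSpace)))

/-- The `𝒲_p`-information topology. -/
def infoTopWp (p : ℝ) (d : Y → Y → ℝ≥0∞) (N : ℕ) :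
    TopologicalSpace (Measure (Fin N → Y)) :=
  ⨅ (t : ℕ) (_ : 1 ≤ t) (h : t ≤ N - 1),
    TopologicalSpace.induced (infoMap N t (le_trans h (Nat.sub_le N 1)))
      (ballTop (Wp p (prodDist p (pathDist p d) (Wp p (pathDist p d)))))

/-- Aldous' prediction process `Z_t^μ` (as a function of the path). -/
def predict (N : ℕ) (μ : Measure (Fin N → Y)) (t : ℕ) (h : t ≤ N) :
    (Fin N → Y) → Measure (Fin N → Y) :=
  fun x => condK (μ.map (fun y => (restr t h y, y))) (restr t h x)

/-- Aldous' map `E`, sending `μ` to the joint law of the path together with its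
prediction process. -/
def aldousMap (N : ℕ) (μ : Measure (Fin N → Y)) :
    Measure ((Fin N → Y) × (Fin (N + 1) → Measure (Fin N → Y))) :=
  μ.map (fun x =>
    (x, fun t : Fin (N + 1) => predict N μ t.1 (Nat.lt_succ_iff.mp t.2) x))

/-- Aldous' extended weak topology. -/
def aldousTopW (N : ℕ) : TopologicalSpace (Measure (Fin N → Y)) :=
  TopologicalSpace.induced (aldousMap N)
    (weakTop (prodTop Pi.topologicalSpace
      (@Pi.topologicalSpace (Fin (N + 1)) (fun _ => Measure (Fin N → Y))
        (fun _ => weakTop Pi.topologicalSpace))))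

/-- The extended `𝒲_p`-topology. -/
def aldousTopWp (p : ℝ) (d : Y → Y → ℝ≥0∞) (N : ℕ) :
    TopologicalSpace (Measure (Fin N → Y)) :=
  TopologicalSpace.induced (aldousMap N)
    (ballTop (Wp p (prodDist p (pathDist p d)
      (fun Z Z' : Fin (N + 1) → Measure (Fin N → Y) =>
        (∑ t, Wp p (pathDist p d) (Z t) (Z' t) ^ p) ^ (1 / p)))))

end PathStructures

/-! ### The lifted two-time-point space `𝒳₁ × 𝒫_p(𝒳₂)` -/

section Lifted

variable {A B : Type*} [MeasurableSpace A] [MeasurableSpace B]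

/-- The nested distance on `𝒳₁ × 𝒫_p(𝒳₂)`. -/
def liftDist (p : ℝ) (dA : A → A → ℝ≥0∞) (dB : B → B → ℝ≥0∞) :
    (A × Measure B) → (A × Measure B) → ℝ≥0∞ :=
  fun u v => (dA u.1 v.1 ^ p + Wp p dB u.2 v.2 ^ p) ^ (1 / p)

/-- `η` is a version of the measure-valued conditional expectation
`E_γ[X̂₂ | Y⃗]` (i.e. the barycenter of a regular conditional law of `X̂₂`
given `Y⃗ = (Y₁, Ŷ₂)`). -/
def IsCondBar (γ : Measure ((A × Measure B) × (A × Measure B)))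
    (η : (A × Measure B) × (A × Measure B) → Measure B) : Prop :=
  (∃ g : (A × Measure B) → Measure B, Measurable g ∧ ∀ z, η z = g z.2) ∧
  (∀ z, IsProbabilityMeasure (η z)) ∧
  ∀ S : Set (A × Measure B), MeasurableSet S → ∀ E : Set B, MeasurableSet E →
    ∫⁻ z in {z | z.2 ∈ S}, η z E ∂γ = ∫⁻ z in {z | z.2 ∈ S}, z.1.2 E ∂γ

/-- `AW̄_p`, the `p`-Wasserstein distance on `𝒫_p(𝒳₁ × 𝒫_p(𝒳₂))`. -/
def AWbar (p : ℝ) (dA : A → A → ℝ≥0∞) (dB : B → B → ℝ≥0∞)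
    (μ ν : Measure (A × Measure B)) : ℝ≥0∞ :=
  Wp p (liftDist p dA dB) μ ν

/-- `CW̄_p`, the lifted causal Wasserstein "distance". -/
def CWbar (p : ℝ) (dA : A → A → ℝ≥0∞) (dB : B → B → ℝ≥0∞)
    (μ ν : Measure (A × Measure B)) : ℝ≥0∞ :=
  ⨅ γ ∈ Cpl μ ν, ⨅ η ∈ {η | IsCondBar γ η},
    (∫⁻ z, (dA z.1.1 z.2.1 ^ p + Wp p dB (η z) z.2.2 ^ p) ∂γ) ^ (1 / p)

/-- `SCW̄_p`, the symmetrization of `CW̄_p`. -/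
def SCWbar (p : ℝ) (dA : A → A → ℝ≥0∞) (dB : B → B → ℝ≥0∞)
    (μ ν : Measure (A × Measure B)) : ℝ≥0∞ :=
  max (CWbar p dA dB μ ν) (CWbar p dA dB ν μ)

/-- Membership in `𝒫_p(𝒳₁ × 𝒫_p(𝒳₂))`: a probability measure, concentrated on
`𝒳₁ × 𝒫_p(𝒳₂)`, with finite `p`-th moment for the nested distance. -/
def MemPpLift (p : ℝ) (dA : A → A → ℝ≥0∞) (dB : B → B → ℝ≥0∞)
    (μ : Measure (A × Measure B)) : Prop :=
  IsProbabilityMeasure μ ∧ (∀ᵐ z ∂μ, MemPp p dB z.2) ∧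
    ∃ z₀ : A × Measure B, MemPp p dB z₀.2 ∧ ∫⁻ z, liftDist p dA dB z₀ z ^ p ∂μ ≠ ∞

/-- Two-time-point causality: given a coupling `π` of measures on products
`A₁ × B₁` and `A₂ × B₂`, the conditional law of `Y₁` given `X = (X₁, X₂)`
coincides with the conditional law of `Y₁` given `X₁`. -/
def Causal2 {A₁ B₁ A₂ B₂ : Type*} [MeasurableSpace A₁] [MeasurableSpace B₁]
    [MeasurableSpace A₂] [MeasurableSpace B₂]
    (π : Measure ((A₁ × B₁) × (A₂ × B₂))) : Prop :=
  ∀ S : Set A₂, MeasurableSet S →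
    (π[fun z => S.indicator (fun _ => (1 : ℝ)) z.2.1 |
        MeasurableSpace.comap Prod.fst inferInstance])
      =ᵐ[π]
    (π[fun z => S.indicator (fun _ => (1 : ℝ)) z.2.1 |
        MeasurableSpace.comap (fun z => z.1.1) inferInstance])

/-- The two-time-point causal Wasserstein "distance" on `𝒫_p(𝒳₁ × 𝒳₂)`. -/
def CW2 (p : ℝ) (dA : A → A → ℝ≥0∞) (dB : B → B → ℝ≥0∞)
    (μ ν : Measure (A × B)) : ℝ≥0∞ :=
  ⨅ π ∈ {π ∈ Cpl μ ν | Causal2 π},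
    (∫⁻ z, (dA z.1.1 z.2.1 ^ p + dB z.1.2 z.2.2 ^ p) ∂π) ^ (1 / p)

end Lifted

/-!
A kernel `κ` from `A` to `B × Y` and a law `μ` on `A` determine `μ ⊗ₘ κ`, whose disintegration is
`κ` up to a `μ`-null set; conversely a law on `A × 𝒫(B × Y)` carried by a graph is of the form
`a ↦ (a, κ a)` pushed forward from its first marginal. So the theorem reduces to two facts about
`κ`. If `κ a` is carried by the graph of some `h_a` for almost every `a`, then conditioning `κ` on
`B` gives a kernel from `A × B` to `Y` whose values are Dirac masses, and reading off their atoms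
selects the functions `h_a` jointly measurably in `(a, b)`. And the `p`-th moment of `κ a` is
controlled by that of one fixed law plus `Wp ^ p`, so finite moments of the law on `A × 𝒫(B × Y)`
pass to `μ ⊗ₘ κ`.
-/

section GraphKernels

variable {A B C Y : Type*} [MeasurableSpace A] [MeasurableSpace B] [MeasurableSpace C]
  [MeasurableSpace Y]

theorem measurableSet_setOf_kernel_eq [MeasurableSpace.CountablyGenerated C] (κ η : Kernel A C)
    [IsFiniteKernel κ] : MeasurableSet {a | κ a = η a} := by
  let S := generateSetAlgebra (MeasurableSpace.countableGeneratingSet C)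
  have hS : IsSetAlgebra S := isSetAlgebra_generateSetAlgebra
  have hS_countable : S.Countable :=
    countable_generateSetAlgebra MeasurableSpace.countable_countableGeneratingSet
  have hS_gen : ‹MeasurableSpace C› = MeasurableSpace.generateFrom S := by
    rw [generateFrom_generateSetAlgebra_eq, MeasurableSpace.generateFrom_countableGeneratingSet]
  have hS_meas : ∀ s ∈ S, MeasurableSet s := fun s hs ↦
    hS_gen ▸ MeasurableSpace.measurableSet_generateFrom hs
  have h_eq : {a | κ a = η a} = ⋂ s ∈ S, {a | κ a s = η a s} := by
    ext a
    simp only [Set.mem_ofPred_eq, Set.mem_iInter]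
    exact ⟨fun h _ _ ↦ by rw [h], fun h ↦ ext_of_generate_finite S hS_gen
      (fun s hs t ht _ ↦ hS.inter_mem hs ht) h (h _ hS.univ_mem)⟩
  rw [h_eq]
  exact .biInter hS_countable fun s hs ↦ measurableSet_eq_fun
    (κ.measurable_coe (hS_meas s hs)) (η.measurable_coe (hS_meas s hs))

variable (C) in
open Classical in
/-- The tautological Markov kernel from `Measure C` to `C`, sending a probability measure to itself;
a measure of another mass is sent to an arbitrary Dirac mass. -/
def evalKernel [Nonempty C] : Kernel (Measure C) C where
  toFun m := if m Set.univ = 1 then m else Measure.dirac (Classical.arbitrary C)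
  measurable' := Measurable.ite
    (measurableSet_eq_fun (Measure.measurable_coe .univ) measurable_const)
    measurable_id measurable_const

theorem evalKernel_apply [Nonempty C] (m : Measure C) [IsProbabilityMeasure m] :
    evalKernel C m = m :=
  if_pos measure_univ

instance [Nonempty C] : IsMarkovKernel (evalKernel C) where
  isProbabilityMeasure m := by
    by_cases hm : m Set.univ = 1
    · have : IsProbabilityMeasure m := ⟨hm⟩
      rwa [evalKernel_apply]
    · have : evalKernel C m = Measure.dirac (Classical.arbitrary C) := if_neg hm
      rw [this]
      infer_instance

-- The graph of `G` need not be measurable in `A × Measure C`. It is contained in the measurable set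
-- where the Markov versions of `z.2` and `G z.1` agree, which therefore has full measure.
theorem exists_isMarkovKernel_ae_eq [MeasurableSpace.CountablyGenerated C] [Nonempty C]
    {α : Measure (A × Measure C)} [IsProbabilityMeasure α] {G : A → Measure C}
    (hG : Measurable G) (hαG : α {z | z.2 = G z.1} = 1)
    (hα : ∀ᵐ z ∂α, IsProbabilityMeasure z.2) :
    ∃ κ : Kernel A C, IsMarkovKernel κ ∧ ∀ᵐ z ∂α, z.2 = κ z.1 := by
  let κ : Kernel A C := (evalKernel C).comap G hG
  let κ₁ : Kernel (A × Measure C) C := (evalKernel C).comap Prod.snd measurable_snd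
  let κ₂ : Kernel (A × Measure C) C := κ.comap Prod.fst measurable_fst
  have h_sub : {z | z.2 = G z.1} ⊆ {z | κ₁ z = κ₂ z} := fun z (hz : z.2 = G z.1) ↦
    congrArg (evalKernel C) hz
  have h_ae : ∀ᵐ z ∂α, κ₁ z = κ₂ z :=
    (mem_ae_iff_prob_eq_one (measurableSet_setOf_kernel_eq κ₁ κ₂)).2
      (le_antisymm prob_le_one (hαG ▸ measure_mono h_sub))
  refine ⟨κ, inferInstance, ?_⟩
  filter_upwards [h_ae, hα] with z hz _
  exact (evalKernel_apply z.2).symm.trans hz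

theorem map_fst_prodMk_eq_self {μ : Measure (A × C)} {f : A → C} (hf : Measurable f)
    (hμf : ∀ᵐ z ∂μ, z.2 = f z.1) : μ.fst.map (fun a ↦ (a, f a)) = μ := by
  rw [Measure.fst, Measure.map_map (by fun_prop) measurable_fst]
  conv_rhs => rw [← Measure.map_id (μ := μ)]
  exact Measure.map_congr (hμf.mono fun z hz ↦ Prod.ext rfl hz.symm)

theorem exists_measurable_eq_of_ae_eq [StandardBorelSpace Y] [Nonempty Y] (η : Kernel A Y)
    [IsMarkovKernel η] :
    ∃ g : A → Y, Measurable g ∧ ∀ a y, (∀ᵐ y' ∂η a, y' = y) → g a = y := by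
  have he := measurableEmbedding_embeddingReal Y
  obtain ⟨r, hr, hre⟩ := he.exists_measurable_extend measurable_id fun _ ↦ inferInstance
  have h_mean : Measurable fun a ↦ ∫ y, embeddingReal Y y ∂η a :=
    ((he.measurable.comp measurable_snd).stronglyMeasurable.integral_kernel_prod_right'
      (κ := η)).measurable
  refine ⟨fun a ↦ r (∫ y, embeddingReal Y y ∂η a), hr.comp h_mean, fun a y hy ↦ ?_⟩
  have h_dirac : ∫ y', embeddingReal Y y' ∂η a = embeddingReal Y y := by
    rw [integral_congr_ae (hy.mono fun y' hy' ↦ congrArg (embeddingReal Y) hy')]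
    simp only [integral_const, probReal_univ, one_smul]
  exact (congrArg r h_dirac).trans (congrFun hre y)

theorem exists_measurable_ae_graph [MeasurableSpace.CountableOrCountablyGenerated A B]
    [StandardBorelSpace Y] [Nonempty Y] (κ : Kernel A (B × Y)) [IsFiniteKernel κ] :
    ∃ g : A × B → Y, Measurable g ∧ ∀ (a : A) (h : B → Y), (∀ᵐ w ∂κ a, w.2 = h w.1) →
      ∀ᵐ w ∂κ a, w.2 = g (a, w.1) := by
  obtain ⟨g, hg, hg_eq⟩ := exists_measurable_eq_of_ae_eq κ.condKernel
  refine ⟨g, hg, fun a h hh ↦ ?_⟩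
  have h_cond : ∀ᵐ b ∂κ.fst a, ∀ᵐ y ∂κ.condKernel (a, b), y = h b := by
    rw [← κ.disintegrate κ.condKernel] at hh
    exact Kernel.ae_ae_of_ae_compProd hh
  rw [Kernel.fst_apply] at h_cond
  filter_upwards [hh, ae_of_ae_map measurable_fst.aemeasurable h_cond] with w hw hw_cond
  rw [hw, hg_eq _ _ hw_cond]

theorem exists_compProd_graph_eq_one [MeasurableSpace.CountableOrCountablyGenerated A B]
    [StandardBorelSpace Y] [Nonempty Y] {μ : Measure A} [IsProbabilityMeasure μ]
    {κ : Kernel A (B × Y)} [IsMarkovKernel κ]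
    (hκ : ∀ᵐ a ∂μ, ∃ h : B → Y, Measurable h ∧ κ a {w | w.2 = h w.1} = 1) :
    ∃ g : A × B → Y, Measurable g ∧ (μ ⊗ₘ κ) {z | z.2.2 = g (z.1, z.2.1)} = 1 := by
  obtain ⟨g, hg, hgκ⟩ := exists_measurable_ae_graph κ
  have hg_graph : MeasurableSet {z : A × B × Y | z.2.2 = g (z.1, z.2.1)} :=
    measurableSet_eq_fun (by fun_prop) (by fun_prop)
  refine ⟨g, hg, (mem_ae_iff_prob_eq_one hg_graph).1 ((Measure.ae_compProd_iff hg_graph).2 ?_)⟩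
  filter_upwards [hκ] with a ⟨h, hh, hκh⟩
  have hh_graph : MeasurableSet {w : B × Y | w.2 = h w.1} :=
    measurableSet_eq_fun (by fun_prop) (by fun_prop)
  exact hgκ a h ((mem_ae_iff_prob_eq_one hh_graph).2 hκh)

end GraphKernels

section Disintegration

variable {A B C Y : Type*} [MeasurableSpace A] [MeasurableSpace B] [MeasurableSpace C]
  [MeasurableSpace Y]

theorem condK_eq_condKernel [StandardBorelSpace C] [Nonempty C] (ρ : Measure (A × C))
    [hρ : IsFiniteMeasure ρ] : condK ρ = ρ.condKernel :=
  dif_pos hρ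

theorem ae_condK_graph_eq_one [StandardBorelSpace (B × Y)] [Nonempty (B × Y)] [MeasurableEq Y]
    {μ : Measure (A × B × Y)} [IsProbabilityMeasure μ] {g : A × B → Y} (hg : Measurable g)
    (hμg : μ {z | z.2.2 = g (z.1, z.2.1)} = 1) :
    ∀ᵐ a ∂μ.map Prod.fst, condK μ a {w | w.2 = g (a, w.1)} = 1 := by
  have h_ae : ∀ᵐ z ∂μ, z.2.2 = g (z.1, z.2.1) :=
    (mem_ae_iff_prob_eq_one (measurableSet_eq_fun (by fun_prop) (by fun_prop))).2 hμg
  rw [← μ.disintegrate μ.condKernel] at h_ae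
  rw [condK_eq_condKernel]
  filter_upwards [Measure.ae_ae_of_ae_compProd h_ae] with a ha
  exact (mem_ae_iff_prob_eq_one (measurableSet_eq_fun (by fun_prop) (by fun_prop))).1 ha

theorem disint_compProd [StandardBorelSpace C] [Nonempty C] (μ : Measure A) [IsFiniteMeasure μ]
    (κ : Kernel A C) [IsMarkovKernel κ] : disint (μ ⊗ₘ κ) = μ.map (fun a ↦ (a, κ a)) := by
  let η := (μ ⊗ₘ κ).condKernel
  calc disint (μ ⊗ₘ κ)
      = (μ ⊗ₘ κ).map ((fun a ↦ (a, η a)) ∘ Prod.fst) := by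
        rw [disint, condK_eq_condKernel]
        rfl
    _ = (μ ⊗ₘ κ).fst.map (fun a ↦ (a, η a)) :=
        (Measure.map_map (measurable_id.prodMk η.measurable) measurable_fst).symm
    _ = μ.map (fun a ↦ (a, κ a)) := by
        rw [Measure.fst_compProd]
        exact Measure.map_congr
          ((condKernel_compProd μ κ).mono fun a ha ↦ Prod.ext rfl ha)

end Disintegration

section Wasserstein

variable {A C : Type*} {p : ℝ}

/-- The triangle inequality for `d ^ p` up to the factor `2 ^ p`. Unlike the triangle inequality for
`d`, it passes from two distances to their `prodDist` for exponents `p < 1` too. -/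
def QuasiTriangle (p : ℝ) (d : C → C → ℝ≥0∞) : Prop :=
  ∀ x y z, d x z ^ p ≤ 2 ^ p * (d x y ^ p + d y z ^ p)

theorem quasiTriangle_edist [PseudoEMetricSpace C] (hp : 0 ≤ p) :
    QuasiTriangle p (edist : C → C → ℝ≥0∞) := fun x y z ↦
  (ENNReal.rpow_le_rpow (edist_triangle x y z) hp).trans
    (ENNReal.add_rpow_le_two_rpow_mul_rpow_add_rpow _ _ hp)

theorem prodDist_rpow (hp : p ≠ 0) (d₁ : A → A → ℝ≥0∞) (d₂ : C → C → ℝ≥0∞) (u v : A × C) :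
    prodDist p d₁ d₂ u v ^ p = d₁ u.1 v.1 ^ p + d₂ u.2 v.2 ^ p := by
  rw [prodDist, one_div, ENNReal.rpow_inv_rpow hp]

theorem prodDist_comm {d₁ : A → A → ℝ≥0∞} {d₂ : C → C → ℝ≥0∞} (h₁ : ∀ a b, d₁ a b = d₁ b a)
    (h₂ : ∀ x y, d₂ x y = d₂ y x) (u v : A × C) : prodDist p d₁ d₂ u v = prodDist p d₁ d₂ v u := by
  rw [prodDist, prodDist, h₁, h₂]

theorem measurable_prodDist [MeasurableSpace A] [MeasurableSpace C] {d₁ : A → A → ℝ≥0∞}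
    {d₂ : C → C → ℝ≥0∞} (h₁ : ∀ a, Measurable (d₁ a)) (h₂ : ∀ x, Measurable (d₂ x)) (u : A × C) :
    Measurable (prodDist p d₁ d₂ u) :=
  ((((h₁ u.1).comp measurable_fst).pow_const p).add
    (((h₂ u.2).comp measurable_snd).pow_const p)).pow_const (1 / p)

theorem QuasiTriangle.prodDist (hp : p ≠ 0) {d₁ : A → A → ℝ≥0∞} {d₂ : C → C → ℝ≥0∞}
    (h₁ : QuasiTriangle p d₁) (h₂ : QuasiTriangle p d₂) :
    QuasiTriangle p (prodDist p d₁ d₂) := fun u v w ↦ by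
  simp only [prodDist_rpow hp]
  calc d₁ u.1 w.1 ^ p + d₂ u.2 w.2 ^ p
      ≤ 2 ^ p * (d₁ u.1 v.1 ^ p + d₁ v.1 w.1 ^ p) + 2 ^ p * (d₂ u.2 v.2 ^ p + d₂ v.2 w.2 ^ p) :=
        add_le_add (h₁ _ _ _) (h₂ _ _ _)
    _ = 2 ^ p * (d₁ u.1 v.1 ^ p + d₂ u.2 v.2 ^ p + (d₁ v.1 w.1 ^ p + d₂ v.2 w.2 ^ p)) := by ring

variable [MeasurableSpace A] [MeasurableSpace C]

theorem lintegral_prodDist_rpow (hp : p ≠ 0) {d₁ : A → A → ℝ≥0∞} {u : A × C}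
    (h₁ : Measurable (d₁ u.1)) (d₂ : C → C → ℝ≥0∞) (μ : Measure (A × C)) :
    ∫⁻ z, prodDist p d₁ d₂ u z ^ p ∂μ =
      ∫⁻ a, d₁ u.1 a ^ p ∂μ.fst + ∫⁻ z, d₂ u.2 z.2 ^ p ∂μ := by
  have h₁_fst : Measurable fun z : A × C ↦ d₁ u.1 z.1 ^ p :=
    (h₁.comp measurable_fst).pow_const p
  simp only [prodDist_rpow hp]
  rw [lintegral_add_left h₁_fst, Measure.fst,
    lintegral_map (h₁.pow_const p) measurable_fst]

variable {d : C → C → ℝ≥0∞} {m m' : Measure C}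

theorem map_swap_mem_Cpl {π : Measure (C × C)} (hπ : π ∈ Cpl m m') :
    π.map Prod.swap ∈ Cpl m' m :=
  ⟨(Measure.map_map measurable_fst measurable_swap).trans hπ.2,
    (Measure.map_map measurable_snd measurable_swap).trans hπ.1⟩

theorem Wp_comm (hd : ∀ x y, d x y = d y x) (m m' : Measure C) : Wp p d m m' = Wp p d m' m := by
  suffices h_le : ∀ m m', Wp p d m m' ≤ Wp p d m' m from le_antisymm (h_le m m') (h_le m' m)
  refine fun m m' ↦ le_iInf₂ fun π hπ ↦ iInf₂_le_of_le _ (map_swap_mem_Cpl hπ) (le_of_eq ?_)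
  have h_swap : ∫⁻ z, d z.1 z.2 ^ p ∂π.map Prod.swap = ∫⁻ z, d z.2 z.1 ^ p ∂π :=
    lintegral_map_equiv _ MeasurableEquiv.prodComm
  simp only [h_swap, hd]

theorem Wp_rpow (hp : 0 < p) (d : C → C → ℝ≥0∞) (m m' : Measure C) :
    Wp p d m m' ^ p = ⨅ π ∈ Cpl m m', ∫⁻ z, d z.1 z.2 ^ p ∂π := by
  have h := (ENNReal.orderIsoRpow p hp).map_iInf₂
    (fun π (_ : π ∈ Cpl m m') ↦ (∫⁻ z, d z.1 z.2 ^ p ∂π) ^ (1 / p))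
  simpa only [ENNReal.orderIsoRpow_apply, one_div, ENNReal.rpow_inv_rpow hp.ne', Wp] using h

theorem lintegral_rpow_le_of_mem_Cpl (hd : QuasiTriangle p d) {x : C} (hdx : Measurable (d x))
    (hp : 0 ≤ p) {π : Measure (C × C)} (hπ : π ∈ Cpl m m') :
    ∫⁻ y, d x y ^ p ∂m' ≤ 2 ^ p * (∫⁻ y, d x y ^ p ∂m + ∫⁻ z, d z.1 z.2 ^ p ∂π) := by
  have hdxp : Measurable fun y ↦ d x y ^ p := hdx.pow_const p
  have hdxp_fst : Measurable fun z : C × C ↦ d x z.1 ^ p := hdxp.comp measurable_fst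
  rw [← hπ.1, ← hπ.2, lintegral_map hdxp measurable_fst, lintegral_map hdxp measurable_snd,
    ← lintegral_add_left hdxp_fst,
    ← lintegral_const_mul' _ _ (ENNReal.rpow_ne_top_of_nonneg hp ENNReal.ofNat_ne_top)]
  exact lintegral_mono fun z ↦ hd x z.1 z.2

theorem lintegral_rpow_le_Wp_rpow (hd : QuasiTriangle p d) {x : C} (hdx : Measurable (d x))
    (hp : 0 < p) (m m' : Measure C) :
    ∫⁻ y, d x y ^ p ∂m' ≤ 2 ^ p * (∫⁻ y, d x y ^ p ∂m + Wp p d m m' ^ p) := by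
  have h2_ne_top : (2 : ℝ≥0∞) ^ p ≠ ∞ := ENNReal.rpow_ne_top_of_nonneg hp.le ENNReal.ofNat_ne_top
  have h2_ne_zero : (2 : ℝ≥0∞) ^ p ≠ 0 := by
    simp only [ne_eq, ENNReal.rpow_eq_zero_iff_of_pos hp, OfNat.ofNat_ne_zero, not_false_eq_true]
  rw [Wp_rpow hp, iInf_subtype', ENNReal.add_iInf, ENNReal.mul_iInf_of_ne h2_ne_zero h2_ne_top]
  exact le_iInf fun π ↦ lintegral_rpow_le_of_mem_Cpl hd hdx hp.le π.2

-- The center `m₀` inherits a finite moment from some `M ω` at finite distance from it, and then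
-- passes it on to almost every `M ω`, integrably in `ω`.
theorem exists_lintegral_rpow_ne_top {Ω : Type*} [MeasurableSpace Ω] {P : Measure Ω}
    [IsProbabilityMeasure P] {M : Ω → Measure C} {m₀ : Measure C} (hp : 0 < p)
    (hd : QuasiTriangle p d) (hd_meas : ∀ x, Measurable (d x)) (hd_comm : ∀ x y, d x y = d y x)
    (hM : ∀ᵐ ω ∂P, MemPp p d (M ω)) (hm₀ : ∫⁻ ω, Wp p d m₀ (M ω) ^ p ∂P ≠ ∞) :
    ∃ x, ∫⁻ ω, ∫⁻ y, d x y ^ p ∂M ω ∂P ≠ ∞ := by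
  have h2 : (2 : ℝ≥0∞) ^ p ≠ ∞ := ENNReal.rpow_ne_top_of_nonneg hp.le ENNReal.ofNat_ne_top
  obtain ⟨ω, hω, -, x, hx⟩ : ∃ ω, Wp p d m₀ (M ω) ^ p ≠ ∞ ∧ MemPp p d (M ω) := by
    by_contra! h_top
    have h_ae : ∀ᵐ ω ∂P, Wp p d m₀ (M ω) ^ p = ∞ :=
      hM.mono fun ω hω ↦ by_contra fun h ↦ h_top ω h hω
    exact hm₀ (by rw [lintegral_congr_ae h_ae, lintegral_const, measure_univ, mul_one])
  have hx₀ : ∫⁻ y, d x y ^ p ∂m₀ ≠ ∞ := by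
    rw [Wp_comm hd_comm] at hω
    exact ne_top_of_le_ne_top (ENNReal.mul_ne_top h2 (ENNReal.add_ne_top.2 ⟨hx, hω⟩))
      (lintegral_rpow_le_Wp_rpow hd (hd_meas x) hp (M ω) m₀)
  refine ⟨x, ne_top_of_le_ne_top ?_
    (lintegral_mono fun ω ↦ lintegral_rpow_le_Wp_rpow hd (hd_meas x) hp m₀ (M ω))⟩
  rw [lintegral_const_mul' _ _ h2, lintegral_add_left measurable_const, lintegral_const,
    measure_univ, mul_one]
  exact ENNReal.mul_ne_top h2 (ENNReal.add_ne_top.2 ⟨hx₀, hm₀⟩)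

theorem memPp_fst_compProd {dA : A → A → ℝ≥0∞} {α : Measure (A × Measure C)} {κ : Kernel A C}
    [IsMarkovKernel κ] (hp : 0 < p) (hdA : ∀ a, Measurable (dA a)) (hd : QuasiTriangle p d)
    (hd_meas : ∀ x, Measurable (d x)) (hd_comm : ∀ x y, d x y = d y x)
    (hα : MemPp p (prodDist p dA (Wp p d)) α) (hα_snd : ∀ᵐ z ∂α, MemPp p d z.2)
    (hακ : ∀ᵐ z ∂α, z.2 = κ z.1) : MemPp p (prodDist p dA d) (α.fst ⊗ₘ κ) := by
  obtain ⟨_, u, hu⟩ := hα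
  rw [lintegral_prodDist_rpow hp.ne' (hdA u.1), ENNReal.add_ne_top] at hu
  obtain ⟨x, hx⟩ := exists_lintegral_rpow_ne_top hp hd hd_meas hd_comm hα_snd hu.2
  have hdx : Measurable fun y ↦ d x y ^ p := (hd_meas x).pow_const p
  have hdx_snd : Measurable fun z : A × C ↦ d x z.2 ^ p := hdx.comp measurable_snd
  have h_snd : ∫⁻ z, d x z.2 ^ p ∂(α.fst ⊗ₘ κ) = ∫⁻ z, ∫⁻ y, d x y ^ p ∂z.2 ∂α := by
    rw [Measure.lintegral_compProd hdx_snd, Measure.fst,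
      lintegral_map hdx.lintegral_kernel measurable_fst]
    exact lintegral_congr_ae (hακ.mono fun z hz ↦ by simp only [hz])
  refine ⟨inferInstance, (u.1, x), ?_⟩
  rw [lintegral_prodDist_rpow (u := (u.1, x)) hp.ne' (hdA u.1), Measure.fst_compProd, h_snd]
  exact ENNReal.add_ne_top.2 ⟨hu.1, hx⟩

end Wasserstein

theorem disint_maps_FP_onto_FP_general
    {A B Y : Type*} [PseudoEMetricSpace A] [MeasurableSpace A] [OpensMeasurableSpace A]
    [PseudoEMetricSpace B] [MeasurableSpace B] [OpensMeasurableSpace B] [StandardBorelSpace B]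
    [Nonempty B] [PseudoEMetricSpace Y] [MeasurableSpace Y] [OpensMeasurableSpace Y]
    [StandardBorelSpace Y] [Nonempty Y] {p : ℝ} (hp : 0 < p) :
    let dBY : B × Y → B × Y → ℝ≥0∞ := prodDist p edist edist
    (∀ (μ : Measure (A × B × Y)) [IsProbabilityMeasure μ] (g : A × B → Y),
      Measurable g → μ {z | z.2.2 = g (z.1, z.2.1)} = 1 →
      ∀ᵐ a ∂μ.map Prod.fst, condK μ a {w : B × Y | w.2 = g (a, w.1)} = 1) ∧
    ∀ α : Measure (A × Measure (B × Y)),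
      MemPp p (prodDist p edist (Wp p dBY)) α →
      (∃ G : A → Measure (B × Y), Measurable G ∧ α {z | z.2 = G z.1} = 1) →
      (∀ᵐ z ∂α, MemPp p dBY z.2 ∧
        ∃ h : B → Y, Measurable h ∧ z.2 {w | w.2 = h w.1} = 1) →
      ∃ ν : Measure (A × B × Y),
        MemPp p (prodDist p edist dBY) ν ∧
        (∃ g : A × B → Y, Measurable g ∧ ν {z | z.2.2 = g (z.1, z.2.1)} = 1) ∧
        disint ν = α := by
  refine ⟨fun μ _ g hg hμg ↦ ae_condK_graph_eq_one hg hμg, fun α hα ⟨G, hG, hαG⟩ hFP ↦ ?_⟩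
  have : IsProbabilityMeasure α := hα.1
  obtain ⟨κ, _, hακ⟩ := exists_isMarkovKernel_ae_eq hG hαG (hFP.mono fun z hz ↦ hz.1.1)
  have hα_map : α.fst.map (fun a ↦ (a, κ a)) = α := map_fst_prodMk_eq_self κ.measurable hακ
  have hκ_graph : ∀ᵐ a ∂α.fst, ∃ h : B → Y, Measurable h ∧ κ a {w | w.2 = h w.1} = 1 := by
    rw [← hα_map] at hFP
    exact (ae_of_ae_map (measurable_id.prodMk κ.measurable).aemeasurable hFP).mono fun a ha ↦ ha.2
  have h_moment : MemPp p (prodDist p edist (prodDist p edist edist)) (α.fst ⊗ₘ κ) :=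
    memPp_fst_compProd hp (fun _ ↦ measurable_edist_right)
      ((quasiTriangle_edist hp.le).prodDist hp.ne' (quasiTriangle_edist hp.le))
      (measurable_prodDist (fun _ ↦ measurable_edist_right) fun _ ↦ measurable_edist_right)
      (prodDist_comm edist_comm edist_comm) hα (hFP.mono fun z hz ↦ hz.1) hακ
  exact ⟨α.fst ⊗ₘ κ, h_moment, exists_compProd_graph_eq_one hκ_graph,
    (disint_compProd α.fst κ).trans hα_map⟩

/-- **Lemma 2.1.**  The disintegration map, restricted to `FP(A × B, Y)`, maps
`FP(A × B, Y)` onto `FP(A, FP(B, Y))`. -/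
theorem disint_maps_FP_onto_FP
    {A B Y : Type} [MetricSpace A] [CompleteSpace A] [SecondCountableTopology A]
    [MeasurableSpace A] [BorelSpace A] [Nonempty A]
    [MetricSpace B] [CompleteSpace B] [SecondCountableTopology B]
    [MeasurableSpace B] [BorelSpace B] [Nonempty B]
    [MetricSpace Y] [CompleteSpace Y] [SecondCountableTopology Y]
    [MeasurableSpace Y] [BorelSpace Y] [Nonempty Y]
    (p : ℝ) (hp : 1 ≤ p) :
    let dA : A → A → ℝ≥0∞ := edist
    let dB : B → B → ℝ≥0∞ := edist
    let dY : Y → Y → ℝ≥0∞ := edist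
    let dBY := prodDist p dB dY
    let d3 := prodDist p dA dBY
    let dLift := prodDist p dA (Wp p dBY)
    -- (i) disintegrating an element of `FP(A × B, Y)` yields an element of
    --     `FP(A, FP(B, Y))`: a.e. conditional law is carried by a graph
    ((∀ (μ : Measure (A × B × Y)) (g : A × B → Y),
        MemPp p d3 μ → Measurable g → μ {z | z.2.2 = g (z.1, z.2.1)} = 1 →
        ∀ᵐ a ∂(μ.map Prod.fst),
          (condK μ) a {w : B × Y | w.2 = g (a, w.1)} = 1) ∧
    -- (ii) every element of `FP(A, FP(B, Y))` arises as such a disintegration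
     (∀ α : Measure (A × Measure (B × Y)),
        MemPp p dLift α →
        (∃ G : A → Measure (B × Y), Measurable G ∧ α {z | z.2 = G z.1} = 1) →
        (∀ᵐ z ∂α, MemPp p dBY z.2 ∧
          ∃ h : B → Y, Measurable h ∧ z.2 {w | w.2 = h w.1} = 1) →
        ∃ ν : Measure (A × B × Y),
          MemPp p d3 ν ∧
          (∃ g : A × B → Y, Measurable g ∧ ν {z | z.2.2 = g (z.1, z.2.1)} = 1) ∧
          disint ν = α)) := by
  obtain ⟨h_into, h_onto⟩ := disint_maps_FP_onto_FP_general (A := A) (B := B) (Y := Y)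
    (zero_lt_one.trans_le hp)
  exact ⟨fun μ g hμ ↦ have := hμ.1; h_into μ g, h_onto⟩

end AWPaper
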